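/- There exists a measure space (X, ℬ, μ) with two commuting invertible measure preserving transformations T₁, T₂ (T₁T₂ = T₂T₁), with T₁ ergodic, such that for every integer ℓ > 0 there exists A ∈ ℬ with μ(A) > 0 satisfying μ(A ∩ T₁^{−n}A ∩ T₁^{−2n}A ∩ T₂^{−n²}A) < μ(A)^ℓ for every n ∈ ℕ with n ≠ 0. -/

import Mathlib

open MeasureTheory

open AddCircle Set Filter

/-- Normalised Haar measure on the two-dimensional torus. -/
noncomputable abbrev torusMeasure : Measure (UnitAddCircle × UnitAddCircle) :=
  (haarAddCircle (T := 1)).prod haarAddCircle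

section RothSet

/-- For large `N`, Behrend's lower bound beats any fixed power. -/
lemma exists_rothNumberNat_div_pow_lt (ℓ : ℕ) : ∃ N : ℕ, 0 < N ∧ 0 < rothNumberNat N ∧
    (rothNumberNat N : ℝ) * (1 / (8 * N)) ^ 2 < (rothNumberNat N * (1 / (8 * N))) ^ ℓ := by
  set N := ⌈Real.exp ((12 * ℓ + 12) ^ 2)⌉₊
  have hNpos : 0 < N := Nat.ceil_pos.2 (Real.exp_pos _)
  have hN0 : (0 : ℝ) < N := by exact_mod_cast hNpos
  have hle : Real.exp ((12 * ℓ + 12) ^ 2) ≤ N := Nat.le_ceil _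
  set t := √(Real.log N) with ht
  have hlog : ((12 : ℝ) * ℓ + 12) ^ 2 ≤ Real.log N := (Real.le_log_iff_exp_le hN0).2 hle
  have hℓ : (0 : ℝ) ≤ ℓ := ℓ.cast_nonneg
  have htl : 12 * (ℓ : ℝ) + 12 ≤ t := Real.le_sqrt_of_sq_le hlog
  have hsq : t ^ 2 = Real.log N := Real.sq_sqrt ((sq_nonneg _).trans hlog)
  have hb := Behrend.roth_lower_bound (N := N)
  rw [← ht] at hb
  set k := rothNumberNat N
  have hk : (0 : ℝ) < k := (mul_pos hN0 (Real.exp_pos _)).trans_le hb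
  have hkN : (k : ℝ) ≤ N := by exact_mod_cast rothNumberNat_le N
  refine ⟨N, hNpos, by exact_mod_cast hk, ?_⟩
  have h1 : (k : ℝ) * (1 / (8 * N)) ^ 2 < Real.exp (-t ^ 2) := by
    rw [hsq, Real.exp_neg, Real.exp_log hN0]
    calc (k : ℝ) * (1 / (8 * N)) ^ 2 ≤ N * (1 / (8 * N)) ^ 2 := by gcongr
      _ = (1 / 64) * (N : ℝ)⁻¹ := by field_simp; norm_num
      _ < (N : ℝ)⁻¹ := by have := inv_pos.2 hN0; linarith
  have h8 : Real.log 8 ≤ 8 := (Real.log_le_sub_one_of_pos (by norm_num)).trans (by norm_num)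
  have h2 : Real.exp (-(4 * t + 8)) ≤ k * (1 / (8 * N)) := by
    calc Real.exp (-(4 * t + 8)) ≤ Real.exp (-4 * t + -Real.log 8) := by gcongr; linarith
      _ = N * Real.exp (-4 * t) * (1 / (8 * N)) := by
        rw [Real.exp_add, Real.exp_neg (Real.log 8), Real.exp_log (by norm_num)]; field_simp
      _ ≤ _ := by gcongr
  calc _ < Real.exp (-t ^ 2) := h1
    _ ≤ Real.exp (ℓ * -(4 * t + 8)) := by
      gcongr
      nlinarith
    _ = Real.exp (-(4 * t + 8)) ^ ℓ := Real.exp_nat_mul _ _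
    _ ≤ _ := by gcongr

/-- The arc of the unit circle with endpoints `a` and `b`, for `0 ≤ a ≤ b ≤ 1`. -/
noncomputable def unitArc (a b : ℝ) : Set UnitAddCircle := {y | (equivIoc 1 0 y : ℝ) ∈ Ioc a b}

lemma measurableSet_unitArc (a b : ℝ) : MeasurableSet (unitArc a b) :=
  (measurable_subtype_coe.comp (measurableEquivIoc 1 0).measurable) measurableSet_Ioc

lemma haarAddCircle_unitArc {a b : ℝ} (ha : 0 ≤ a) (hb : b ≤ 1) :
    haarAddCircle (unitArc a b) = ENNReal.ofReal (b - a) := by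
  have hv : (volume : Measure UnitAddCircle) = haarAddCircle := by
    simp [volume_eq_smul_haarAddCircle]
  rw [← hv, add_projection_respects_measure 1 0 (measurableSet_unitArc a b), ← Real.volume_Ioc]
  congr 1
  ext x
  constructor
  · rintro ⟨h, hx⟩
    have := equivIoc_coe_of_mem hx
    change (equivIoc 1 0 (x : UnitAddCircle) : ℝ) ∈ Ioc a b at h
    rwa [this] at h
  · intro hx
    have hx' : x ∈ Ioc (0 : ℝ) (0 + 1) := ⟨ha.trans_lt hx.1, by linarith [hx.2]⟩
    refine ⟨?_, hx'⟩
    change (equivIoc 1 0 (x : UnitAddCircle) : ℝ) ∈ Ioc a b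
    rwa [equivIoc_coe_of_mem hx']

/-- The union of the short arcs starting at `s / (2 * N)` for `s ∈ S`. -/
noncomputable def thickening (N : ℕ) (S : Finset ℕ) : Set UnitAddCircle :=
  ⋃ s ∈ S, unitArc (s / (2 * N)) (s / (2 * N) + 1 / (8 * N))

lemma mem_thickening {N : ℕ} (hN : 0 < N) {S : Finset ℕ} {y : UnitAddCircle}
    (hy : y ∈ thickening N S) : ∃ s ∈ S, ∃ r : ℝ, 0 < r ∧ r ≤ 1 / 4 ∧
      y = (((s + r) / (2 * N) : ℝ) : UnitAddCircle) ∧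
      y ∈ unitArc (s / (2 * N)) (s / (2 * N) + 1 / (8 * N)) := by
  simp only [thickening, mem_iUnion, exists_prop] at hy
  obtain ⟨s, hs, hy⟩ := hy
  have hN0 : (0 : ℝ) < N := by exact_mod_cast hN
  refine ⟨s, hs, 2 * N * (equivIoc 1 0 y : ℝ) - s, ?_, ?_, ?_, hy⟩
  · have := hy.1
    rw [div_lt_iff₀ (by positivity)] at this
    linarith
  · have := hy.2
    rw [← sub_nonneg] at this
    have h := mul_nonneg (by positivity : 0 ≤ 2 * (N : ℝ)) this
    field_simp at h
    linarith
  · rw [add_sub_cancel, mul_div_cancel_left₀ _ (by positivity)]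
    exact coe_equivIoc.symm

lemma measurableSet_thickening (N : ℕ) (S : Finset ℕ) : MeasurableSet (thickening N S) :=
  S.measurableSet_biUnion fun _ _ => measurableSet_unitArc _ _

lemma haarAddCircle_unitArc_of_lt {N s : ℕ} (h : s < N) :
    haarAddCircle (unitArc (s / (2 * N)) (s / (2 * N) + 1 / (8 * N))) =
      ENNReal.ofReal (1 / (8 * N)) := by
  have hN : (0 : ℝ) < N := by exact_mod_cast (Nat.zero_le s).trans_lt h
  have hs : (s : ℝ) + 1 ≤ N := by exact_mod_cast h
  rw [haarAddCircle_unitArc (by positivity), add_sub_cancel_left]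
  rw [← sub_nonneg]
  field_simp
  linarith

lemma haarAddCircle_thickening {N : ℕ} {S : Finset ℕ} (hS : S ⊆ Finset.range N) :
    haarAddCircle (thickening N S) = ENNReal.ofReal (S.card * (1 / (8 * N))) := by
  rw [thickening, measure_biUnion_finset _ fun _ _ => measurableSet_unitArc _ _,
    Finset.sum_congr rfl fun s hs => haarAddCircle_unitArc_of_lt (Finset.mem_range.1 (hS hs))]
  · rw [ENNReal.ofReal_mul (by positivity)]
    simp
  · have key : ∀ s ∈ S, ∀ t ∈ S, s < t →
        Disjoint (unitArc (s / (2 * N)) (s / (2 * N) + 1 / (8 * N)))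
          (unitArc (t / (2 * N)) (t / (2 * N) + 1 / (8 * N))) := by
      intro s hs t ht hst
      have hN : (0 : ℝ) < N := by
        exact_mod_cast (Nat.zero_le s).trans_lt (Finset.mem_range.1 (hS hs))
      have hst' : (s : ℝ) + 1 ≤ t := by exact_mod_cast hst
      rw [Set.disjoint_left]
      intro y hy hy'
      have h := hy'.1.trans_le hy.2
      rw [← sub_pos] at h
      field_simp at h
      linarith
    intro s hs t ht hst
    rcases hst.lt_or_gt with h | h
    · exact key s hs t ht h
    · exact (key t ht s hs h).symm

lemma torusMeasure_threeAP_thickening_le {N : ℕ} {S : Finset ℕ} (hS : S ⊆ Finset.range N)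
    (hfree : ThreeAPFree (S : Set ℕ)) :
    torusMeasure {p | p.1 ∈ thickening N S ∧ p.1 + p.2 ∈ thickening N S ∧
      p.1 + 2 • p.2 ∈ thickening N S} ≤ ENNReal.ofReal (S.card * (1 / (8 * N)) ^ 2) := by
  set I : ℕ → Set UnitAddCircle :=
    fun s => unitArc (s / (2 * N)) (s / (2 * N) + 1 / (8 * N))
  have hsub : {p : UnitAddCircle × UnitAddCircle | p.1 ∈ thickening N S ∧
      p.1 + p.2 ∈ thickening N S ∧ p.1 + 2 • p.2 ∈ thickening N S} ⊆
      ⋃ s ∈ S, (fun z => (z.1, z.1 + z.2)) ⁻¹' (I s ×ˢ I s) := by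
    rintro ⟨z, d⟩ ⟨h1, h2, h3⟩
    have hN : 0 < N := by
      by_contra h0
      obtain rfl : N = 0 := by omega
      obtain rfl : S = ∅ := by simpa using hS
      simp [thickening] at h1
    have hN0 : (0 : ℝ) < N := by exact_mod_cast hN
    obtain ⟨a, ha, r, hr, hr', e1, m1⟩ := mem_thickening hN h1
    obtain ⟨b, hb, u, hu, hu', e2, m2⟩ := mem_thickening hN h2
    obtain ⟨c, hc, v, hv, hv', e3, m3⟩ := mem_thickening hN h3
    have hsum : ((((a + r) / (2 * N) + (c + v) / (2 * N) - 2 * ((b + u) / (2 * N)) : ℝ)) :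
        UnitAddCircle) = 0 := by
      rw [coe_sub, coe_add, ← e1, ← e3, two_mul, coe_add, ← e2]
      simp only [two_nsmul]
      abel
    obtain ⟨m, hm⟩ := (coe_eq_zero_iff 1).1 hsum
    have hm' : ((2 * N * m - (a + c - 2 * b) : ℤ) : ℝ) = r + v - 2 * u := by
      push_cast
      simp only [zsmul_eq_mul, mul_one] at hm
      rw [hm]
      field_simp
      ring
    have hlt : (2 * N * m - (a + c - 2 * b) : ℤ) < 1 := by
      rw [← @Int.cast_lt ℝ, hm']; push_cast; linarith
    have hgt : -1 < (2 * N * m - (a + c - 2 * b) : ℤ) := by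
      rw [← @Int.cast_lt ℝ, hm']; push_cast; linarith
    have haN := Finset.mem_range.1 (hS ha)
    have hbN := Finset.mem_range.1 (hS hb)
    have hcN := Finset.mem_range.1 (hS hc)
    have hm0 : m = 0 := by
      by_contra hne
      rcases lt_or_gt_of_ne hne with h | h <;> nlinarith
    subst hm0
    have heq : a + c = b + b := by omega
    have hab : a = b := hfree ha hb hc heq
    subst hab
    simp only [mem_iUnion, exists_prop]
    exact ⟨a, ha, m1, m2⟩
  calc _ ≤ torusMeasure (⋃ s ∈ S, (fun z => (z.1, z.1 + z.2)) ⁻¹' (I s ×ˢ I s)) :=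
        measure_mono hsub
    _ ≤ ∑ s ∈ S, torusMeasure ((fun z => (z.1, z.1 + z.2)) ⁻¹' (I s ×ˢ I s)) :=
        measure_biUnion_finset_le _ _
    _ = ∑ s ∈ S, ENNReal.ofReal (1 / (8 * N)) ^ 2 := by
      refine Finset.sum_congr rfl fun s hs => ?_
      rw [(measurePreserving_prod_add haarAddCircle haarAddCircle).measure_preimage
        ((measurableSet_unitArc _ _).prod (measurableSet_unitArc _ _)).nullMeasurableSet,
        Measure.prod_prod, haarAddCircle_unitArc_of_lt (Finset.mem_range.1 (hS hs)), sq]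
    _ = _ := by
      rw [ENNReal.ofReal_mul (by positivity), ENNReal.ofReal_pow (by positivity)]
      simp

/-- Sets in the circle with very few three-term progressions, from Behrend's construction. -/
lemma exists_torusMeasure_threeAP_lt_pow (ℓ : ℕ) : ∃ B : Set UnitAddCircle, MeasurableSet B ∧
    0 < haarAddCircle B ∧
    torusMeasure {p | p.1 ∈ B ∧ p.1 + p.2 ∈ B ∧ p.1 + 2 • p.2 ∈ B} < haarAddCircle B ^ ℓ := by
  obtain ⟨N, hN, hk, h⟩ := exists_rothNumberNat_div_pow_lt ℓ
  obtain ⟨S, hS, hcard, hfree⟩ := rothNumberNat_spec N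
  have hN0 : (0 : ℝ) < N := by exact_mod_cast hN
  have hk0 : (0 : ℝ) < rothNumberNat N := by exact_mod_cast hk
  refine ⟨thickening N S, measurableSet_thickening N S, ?_,
    (torusMeasure_threeAP_thickening_le hS hfree).trans_lt ?_⟩
  · rw [haarAddCircle_thickening hS, hcard, ENNReal.ofReal_pos]
    positivity
  · rw [haarAddCircle_thickening hS, hcard, ← ENNReal.ofReal_pow (by positivity)]
    exact (ENNReal.ofReal_lt_ofReal_iff (by positivity)).2 h

end RothSet

section Ergodicity

/-- The `(a, b)` Fourier coefficient (up to sign of the frequency) of the indicator of `s`. -/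
noncomputable def setFourierCoeff (s : Set (UnitAddCircle × UnitAddCircle)) (a b : ℤ) : ℂ :=
  ∫ z, s.indicator (fun z => fourier a z.1 * fourier b z.2) z ∂torusMeasure

lemma hasSum_sq_setFourierCoeff {s : Set (UnitAddCircle × UnitAddCircle)} (hs : MeasurableSet s) :
    HasSum (fun n : Fin 2 → ℤ => ‖setFourierCoeff s (-n 0) (-n 1)‖ ^ 2) (torusMeasure.real s) := by
  let _ : MeasureSpace UnitAddCircle := ⟨haarAddCircle⟩
  have : IsProbabilityMeasure (volume : Measure UnitAddCircle) :=
    inferInstanceAs (IsProbabilityMeasure haarAddCircle)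
  have he : MeasurePreserving (MeasurableEquiv.finTwoArrow (α := UnitAddCircle))
      volume torusMeasure := measurePreserving_finTwoArrow haarAddCircle
  set s' : Set (UnitAddTorus (Fin 2)) := MeasurableEquiv.finTwoArrow ⁻¹' s 
  have hms : MeasurableSet s' := MeasurableEquiv.finTwoArrow.measurable hs
  have h := UnitAddTorus.hasSum_sq_mFourierCoeff
    (indicatorConstLp 2 hms (measure_ne_top volume s') (1 : ℂ))
  have hae := indicatorConstLp_coeFn (p := 2) (hs := hms) (hμs := measure_ne_top volume s')
    (c := (1 : ℂ))
  convert h using 1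
  · ext n
    congr 2
    rw [setFourierCoeff, ← he.integral_comp MeasurableEquiv.finTwoArrow.measurableEmbedding]
    refine integral_congr_ae ?_
    filter_upwards [hae] with x hx
    rw [hx]
    by_cases hxs : x ∈ s'
    · rw [indicator_of_mem hxs, indicator_of_mem (show MeasurableEquiv.finTwoArrow x ∈ s from hxs)]
      simp [UnitAddTorus.mFourier, MeasurableEquiv.finTwoArrow]
    · rw [indicator_of_notMem hxs,
        indicator_of_notMem (show MeasurableEquiv.finTwoArrow x ∉ s from hxs), smul_zero]
  · trans ∫ x, s'.indicator (fun _ => (1 : ℝ)) x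
    · rw [integral_indicator_const _ hms, smul_eq_mul, mul_one, measureReal_def, measureReal_def,
        he.measure_preimage hs.nullMeasurableSet]
    · refine integral_congr_ae ?_
      filter_upwards [hae] with x hx
      rw [hx]
      by_cases hxs : x ∈ s' <;> simp [hxs]

/-- The skew product `(x, y) ↦ (x + α, y + 2x + α)` on the torus. -/
def skewRotation (α : UnitAddCircle) (z : UnitAddCircle × UnitAddCircle) :
    UnitAddCircle × UnitAddCircle :=
  (z.1 + α, z.2 + (2 • z.1 + α))

lemma measurePreserving_skewRotation (α : UnitAddCircle) :
    MeasurePreserving (skewRotation α) torusMeasure torusMeasure :=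
  (measurePreserving_add_right haarAddCircle α).skew_product
    (g := fun x y => y + (2 • x + α)) (by fun_prop)
    (Eventually.of_forall fun x => (measurePreserving_add_right haarAddCircle (2 • x + α)).map_eq)

lemma setFourierCoeff_eq_of_invariant {α : UnitAddCircle}
    {s : Set (UnitAddCircle × UnitAddCircle)} (hs : MeasurableSet s)
    (hinv : skewRotation α ⁻¹' s = s) (a b : ℤ) :
    setFourierCoeff s a b = fourier (a + b) α * setFourierCoeff s (a + 2 * b) b := by
  have hmeas : Measurable (fun z : UnitAddCircle × UnitAddCircle =>
      (fourier a z.1 * fourier b z.2 : ℂ)) := by fun_prop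
  have hT := measurePreserving_skewRotation α
  conv_lhs => rw [setFourierCoeff, ← hT.map_eq]
  rw [integral_map hT.measurable.aemeasurable (hmeas.indicator hs).aestronglyMeasurable,
    setFourierCoeff, ← integral_const_mul]
  refine integral_congr_ae (Eventually.of_forall fun z => ?_)
  have hz : skewRotation α z ∈ s ↔ z ∈ s := by rw [← mem_preimage, hinv]
  by_cases h : z ∈ s
  · simp only [indicator_of_mem h, indicator_of_mem (hz.2 h)]
    simp only [skewRotation, fourier_apply, ← Circle.coe_mul, ← toCircle_add]
    congr 2
    simp only [smul_add, add_smul, mul_smul, ← natCast_zsmul]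
    rw [smul_comm b]
    push_cast
    abel
  · simp only [indicator_of_notMem h, indicator_of_notMem (mt hz.1 h), mul_zero]

lemma fourier_ne_one_of_irrational {α : ℝ} (hα : Irrational α) {n : ℤ} (hn : n ≠ 0) :
    (fourier n (α : UnitAddCircle) : ℂ) ≠ 1 := by
  rw [fourier_apply, ← Circle.coe_one, Ne, Circle.coe_inj, ← toCircle_zero (T := 1),
    (injective_toCircle one_ne_zero).eq_iff, ← coe_zsmul, coe_eq_zero_iff]
  rintro ⟨m, hm⟩
  simp only [zsmul_eq_mul, mul_one] at hm
  exact (hα.intCast_mul hn).ne_int m hm.symm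

lemma setFourierCoeff_eq_zero {α : ℝ} (hα : Irrational α)
    {s : Set (UnitAddCircle × UnitAddCircle)} (hs : MeasurableSet s)
    (hinv : skewRotation α ⁻¹' s = s) {a b : ℤ} (hab : a ≠ 0 ∨ b ≠ 0) :
    setFourierCoeff s a b = 0 := by
  have hrec := setFourierCoeff_eq_of_invariant hs hinv
  by_cases hb : b = 0
  · have ha : a ≠ 0 := by simpa [hb] using hab
    have h := hrec a b
    subst hb
    simp only [mul_zero, add_zero] at h
    by_contra h0
    exact fourier_ne_one_of_irrational hα ha (mul_right_cancel₀ h0 (by rw [← h, one_mul]))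
  · have hnorm : ∀ k : ℕ, ‖setFourierCoeff s (a + 2 * b * k) b‖ = ‖setFourierCoeff s a b‖ := by
      intro k
      induction k with
      | zero => simp
      | succ k ih =>
        rw [← ih, hrec (a + 2 * b * k) b, norm_mul, fourier_apply, Circle.norm_coe, one_mul]
        congr 2
        push_cast
        ring
    have hinj : Function.Injective (fun k : ℕ => ![-(a + 2 * b * k), -b]) := by
      intro k l hkl
      have := congrFun hkl 0
      simpa [hb] using this
    have hsum := ((hasSum_sq_setFourierCoeff hs).summable.comp_injective hinj).tendsto_atTop_zero
    simp only [Function.comp_def, Matrix.cons_val_zero, Matrix.cons_val_one, neg_neg,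
      hnorm] at hsum
    simpa using tendsto_nhds_unique tendsto_const_nhds hsum

theorem ergodic_skewRotation {α : ℝ} (hα : Irrational α) :
    Ergodic (skewRotation α) torusMeasure where
  toMeasurePreserving := measurePreserving_skewRotation α
  aeconst_set s hs hinv := by
    have h := (hasSum_sq_setFourierCoeff hs).unique (hasSum_single 0 fun n hn => by
      obtain ⟨i, hi⟩ := Function.ne_iff.1 hn
      rw [setFourierCoeff_eq_zero hα hs hinv, norm_zero, zero_pow two_ne_zero]
      fin_cases i
      · exact Or.inl (neg_ne_zero.2 hi)
      · exact Or.inr (neg_ne_zero.2 hi))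
    have h0 : setFourierCoeff s 0 0 = torusMeasure.real s := by
      simp only [setFourierCoeff, fourier_zero, mul_one]
      rw [integral_indicator hs]
      simp
    simp only [Pi.zero_apply, neg_zero, h0, Complex.norm_real, Real.norm_eq_abs, sq_abs] at h
    rw [eventuallyConst_set']
    rcases eq_or_ne (torusMeasure.real s) 0 with hz | hz
    · exact Or.inl (ae_eq_empty.2 ((measureReal_eq_zero_iff).1 hz))
    · right
      have h1 : torusMeasure.real s = 1 := mul_left_cancel₀ hz (by linarith)
      rw [ae_eq_univ, prob_compl_eq_zero_iff hs]
      rw [measureReal_def] at h1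
      simpa using (ENNReal.toReal_eq_one_iff _).1 h1

end Ergodicity

lemma skewRotation_iterate (α : UnitAddCircle) (n : ℕ) (z : UnitAddCircle × UnitAddCircle) :
    (skewRotation α)^[n] z = (z.1 + n • α, z.2 + (2 * n) • z.1 + n ^ 2 • α) := by
  induction n with
  | zero => simp
  | succ n ih =>
    rw [Function.iterate_succ_apply', ih, skewRotation]
    ext
    · simp only [succ_nsmul, add_assoc]
    · simp only
      rw [show 2 * (n + 1) = 2 * n + 2 by ring, show (n + 1) ^ 2 = n ^ 2 + 2 * n + 1 by ring]
      simp only [add_nsmul, smul_add, mul_nsmul', one_nsmul]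
      abel

theorem no_optimal_recurrence_commuting_poly :
    ∃ (X : Type) (_ : MeasurableSpace X) (μ : Measure X) (T₁ T₂ S₁ S₂ : X → X),
      IsProbabilityMeasure μ ∧
      Measurable T₁ ∧ Measurable T₂ ∧ Measurable S₁ ∧ Measurable S₂ ∧
      Function.LeftInverse S₁ T₁ ∧ Function.RightInverse S₁ T₁ ∧
      Function.LeftInverse S₂ T₂ ∧ Function.RightInverse S₂ T₂ ∧
      MeasurePreserving T₁ μ μ ∧ MeasurePreserving T₂ μ μ ∧
      T₁ ∘ T₂ = T₂ ∘ T₁ ∧ Ergodic T₁ μ ∧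
      ∀ ℓ : ℕ, 0 < ℓ → ∃ A : Set X, MeasurableSet A ∧ 0 < μ A ∧
        ∀ n : ℕ, n ≠ 0 →
          μ (A ∩ T₁^[n] ⁻¹' A ∩ T₁^[2 * n] ⁻¹' A ∩ T₂^[n ^ 2] ⁻¹' A) < μ A ^ ℓ := by
  set α : UnitAddCircle := ((√2 : ℝ) : UnitAddCircle)
  have hT := measurePreserving_skewRotation α
  have hR : MeasurePreserving (fun z : UnitAddCircle × UnitAddCircle => (z.1, z.2 + -(2 • α)))
      torusMeasure torusMeasure :=
    (MeasurePreserving.id _).prod (measurePreserving_add_right haarAddCircle (-(2 • α)))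
  refine ⟨UnitAddCircle × UnitAddCircle, inferInstance, torusMeasure, skewRotation α,
    fun z => (z.1, z.2 + -(2 • α)), fun z => (z.1 - α, z.2 - (2 • (z.1 - α) + α)),
    fun z => (z.1, z.2 + 2 • α), inferInstance, hT.measurable, hR.measurable, by fun_prop,
    by fun_prop, fun z => by simp [skewRotation], fun z => by simp [skewRotation],
    fun z => by simp, fun z => by simp, hT, hR, ?_, ergodic_skewRotation irrational_sqrt_two, ?_⟩
  · ext z
    · simp [skewRotation]
    · simp only [skewRotation, Function.comp_apply]
      abel
  intro ℓ _
  obtain ⟨B, hBm, hBpos, hBlt⟩ := exists_torusMeasure_threeAP_lt_pow ℓ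
  have hA : torusMeasure (univ ×ˢ B) = haarAddCircle B := by
    rw [Measure.prod_prod, measure_univ, one_mul]
  refine ⟨univ ×ˢ B, MeasurableSet.univ.prod hBm, by rwa [hA], fun n hn => ?_⟩
  rw [hA]
  refine lt_of_le_of_lt ?_ hBlt
  have hR_iter : ∀ (m : ℕ) (z : UnitAddCircle × UnitAddCircle),
      (fun z : UnitAddCircle × UnitAddCircle => (z.1, z.2 + -(2 • α)))^[m] z =
        (z.1, z.2 + -(m • 2 • α)) := by
    intro m z
    induction m with
    | zero => simp
    | succ m ih =>
      rw [Function.iterate_succ_apply', ih, succ_nsmul (2 • α) m]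
      ext
      · rfl
      · simp only
        abel
  have hΦ : MeasurePreserving (fun z : UnitAddCircle × UnitAddCircle =>
      (z.2 + -(n ^ 2 • 2 • α), ((2 * n : ℕ) : ℤ) • z.1 + 3 • n ^ 2 • α))
      torusMeasure torusMeasure := by
    refine MeasurePreserving.comp (MeasurePreserving.prod
      (measurePreserving_add_right haarAddCircle (-(n ^ 2 • 2 • α)))
      ((measurePreserving_add_right haarAddCircle (3 • n ^ 2 • α)).comp
        (Measure.measurePreserving_zsmul haarAddCircle (n := ((2 * n : ℕ) : ℤ)) ?_)))
      Measure.measurePreserving_swap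
    positivity
  have hmeas : MeasurableSet {p : UnitAddCircle × UnitAddCircle |
      p.1 ∈ B ∧ p.1 + p.2 ∈ B ∧ p.1 + 2 • p.2 ∈ B} := by
    have h2 : Measurable fun p : UnitAddCircle × UnitAddCircle => p.1 + p.2 := by fun_prop
    have h3 : Measurable fun p : UnitAddCircle × UnitAddCircle => p.1 + 2 • p.2 := by fun_prop
    exact (measurable_fst hBm).inter ((h2 hBm).inter (h3 hBm))
  rw [← hΦ.measure_preimage hmeas.nullMeasurableSet]
  refine measure_mono ?_
  rintro z ⟨⟨⟨-, h1⟩, h2⟩, h3⟩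
  rw [mem_preimage, skewRotation_iterate] at h1 h2
  rw [mem_preimage, hR_iter] at h3
  refine ⟨h3.2, ?_, ?_⟩
  · convert h1.2 using 1
    simp only [natCast_zsmul]
    rw [smul_comm (n ^ 2) 2]
    abel
  · convert h2.2 using 1
    simp only [natCast_zsmul]
    rw [smul_comm (n ^ 2) 2, show 2 * (2 * n) = 2 * n + 2 * n by ring,
      show (2 * n) ^ 2 = 4 * n ^ 2 by ring, mul_nsmul' _ 4, add_nsmul]
    abel
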